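/- Let n ≥ 3 be an integer, r > 0, and v(t) = sin(πt/r). Then (∫₀ʳ (v'(t)² + ((n−1)/4)·(n−1 + (n−3)/sinh²(t))·v(t)²) dt) / (∫₀ʳ v(t)² dt) ≤ (n−1)²/4 + π²/r² + (n−1)(n−3)·π⁴/(12·r³). Consequently, the first Dirichlet eigenvalue of −d²/dt² + V₁ on [0,r] (which equals the first Dirichlet eigenvalue λ₁(B_r) of the geodesic ball of radius r in ℍⁿ) is at most (n−1)²/4 + π²/r² + (n−1)(n−3)·π⁴/(12·r³). -/

import Mathlib

/-- `lam` is a Dirichlet eigenvalue of the Schrödinger operator `-d²/dt² + V` on `[0, r]`. -/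
def IsDirichletEigenvalue (V : ℝ → ℝ) (r lam : ℝ) : Prop :=
  ∃ u : ℝ → ℝ,
    (∃ t ∈ Set.Icc (0:ℝ) r, u t ≠ 0) ∧
    ContinuousOn u (Set.Icc 0 r) ∧
    (∀ t ∈ Set.Ioo (0:ℝ) r, DifferentiableAt ℝ u t) ∧
    ContinuousOn (deriv u) (Set.Icc 0 r) ∧
    (∀ t ∈ Set.Ioo (0:ℝ) r, DifferentiableAt ℝ (deriv u) t) ∧
    u 0 = 0 ∧ u r = 0 ∧
    (∀ t ∈ Set.Ioo (0:ℝ) r, -(deriv (deriv u) t) + V t * u t = lam * u t)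

/-- The Rayleigh quotient `R_V[u] = (∫₀ʳ (u'² + V u²))/(∫₀ʳ u²)` on `[0, r]`. -/
noncomputable def Rayleigh (V u : ℝ → ℝ) (r : ℝ) : ℝ :=
  (∫ t in (0:ℝ)..r, (deriv u t) ^ 2 + V t * (u t) ^ 2) / (∫ t in (0:ℝ)..r, (u t) ^ 2)

/-- The potential `V₁(t) = ((n−1)/4)·(n−1 + (n−3)/sinh² t)` arising from the radial ODE for
the first Dirichlet eigenvalue of the geodesic ball in `ℍⁿ`. -/
noncomputable def V1 (n : ℕ) (t : ℝ) : ℝ :=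
  ((n : ℝ) - 1) / 4 * (((n : ℝ) - 1) + ((n : ℝ) - 3) / (Real.sinh t) ^ 2)

/-!
Expanding `sinh⁻² t = ∑ 4 k exp (-2 k t)` and integrating term by term against `t²` gives
`∫ t² / sinh² t = ζ(2)` over `(0, ∞)`; together with `|sin (π t / r)| ≤ π t / r` this bounds the
Rayleigh quotient of the sine.

For `n = 3` the potential is constant and the sine is itself an eigenfunction. For the eigenvalue
when `n ≥ 4`, put `ρ = (sinh t) ^ ((n - 1) / 2)`. The substitution `u = ρ ψ` turns
`-u'' + V₁ u = l u` into `(ρ² ψ')' = -l ρ² ψ`, whose solution `ψ_l` with `ψ_l 0 = 1` is a Neumann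
series, jointly continuous in `l` and `t`. If `ψ_l` is positive on `[0, r]`, then Picone's
inequality for `ρ ψ_l` shows that `l` is at most the Rayleigh quotient of any admissible function.
Hence for every `L` above the Rayleigh quotient of the sine, `ψ_L` is not positive. As `ψ_0 = 1`,
there is a `μ ∈ [0, L]` at which the minimum of `ψ_μ` over `[0, r]` is zero; since a nonnegative
`ψ_μ` is decreasing, it vanishes at `r`, so that `μ` is a Dirichlet eigenvalue.
-/

section RadialEquation

open Set Filter Topology MeasureTheory intervalIntegral

/-- The weights `w` for which the radial equation `(w ψ')' = -l w ψ` is solved below. Extending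
`w` by zero to the left of the origin makes every function of the construction continuous on the
whole line, although the equation is singular at the origin. -/
structure IsRadialWeight (w : ℝ → ℝ) : Prop where
  continuous : Continuous w
  monotone : Monotone w
  eq_zero : ∀ t ≤ 0, w t = 0
  pos : ∀ t, 0 < t → 0 < w t

/-- The function `s ↦ (1 / w s) ∫₀ˢ w f`, so that `w * radialFlux w f` is a primitive of `w f`.
It vanishes for `s ≤ 0`, where the denominator is zero. -/
noncomputable def radialFlux (w f : ℝ → ℝ) (s : ℝ) : ℝ :=
  (∫ x in (0 : ℝ)..s, w x * f x) / w s

/-- The iterates on the constant `1` of the inverse of the radial Laplacian `f ↦ (w f')' / w`. -/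
noncomputable def radialIterate (w : ℝ → ℝ) : ℕ → ℝ → ℝ
  | 0 => fun _ => 1
  | j + 1 => fun t => ∫ s in (0 : ℝ)..t, radialFlux w (radialIterate w j) s

/-- The solution of `(w ψ')' = -l w ψ` with `ψ 0 = 1`, as a Neumann series in `l`. -/
noncomputable def radialSolution (w : ℝ → ℝ) (l t : ℝ) : ℝ :=
  ∑' j : ℕ, (-l) ^ j * radialIterate w j t

theorem hasSum_integral_of_summable_bound {F : ℕ → ℝ → ℝ} {b : ℕ → ℝ} {t : ℝ}
    (hF : ∀ j, Continuous (F j)) (hb : Summable b) (hFb : ∀ j, ∀ x ∈ uIcc 0 t, |F j x| ≤ b j) :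
    HasSum (fun j => ∫ x in (0 : ℝ)..t, F j x) (∫ x in (0 : ℝ)..t, ∑' j, F j x) :=
  hasSum_integral_of_dominated_convergence (fun j _ => b j)
    (fun j => (hF j).aestronglyMeasurable)
    (fun j => ae_of_all _ fun x hx => hFb j x (uIoc_subset_uIcc hx))
    (ae_of_all _ fun _ _ => hb) intervalIntegrable_const
    (ae_of_all _ fun x hx =>
      (Summable.of_norm_bounded hb fun j => hFb j x (uIoc_subset_uIcc hx)).hasSum)

theorem integral_pow_div_factorial (k : ℕ) (t : ℝ) :
    ∫ x in (0 : ℝ)..t, x ^ k / k.factorial = t ^ (k + 1) / (k + 1).factorial := by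
  rw [intervalIntegral.integral_div, integral_pow, zero_pow k.succ_ne_zero, sub_zero, div_div,
    Nat.factorial_succ]
  push_cast
  rfl

theorem radialFlux_const_mul (w f : ℝ → ℝ) (c s : ℝ) :
    radialFlux w (fun x => c * f x) s = c * radialFlux w f s := by
  simp only [radialFlux, mul_left_comm (w _), intervalIntegral.integral_const_mul, mul_div_assoc]

theorem radialSolution_zero_left (w : ℝ → ℝ) (t : ℝ) : radialSolution w 0 t = 1 := by
  rw [radialSolution, tsum_eq_single 0 fun j hj => by simp [hj]]
  simp [radialIterate]

namespace IsRadialWeight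

variable {w f : ℝ → ℝ}

theorem nonneg (hw : IsRadialWeight w) (t : ℝ) : 0 ≤ w t := by
  rcases le_or_gt t 0 with ht | ht
  · exact (hw.eq_zero t ht).ge
  · exact (hw.pos t ht).le

theorem radialFlux_of_nonpos (hw : IsRadialWeight w) (f : ℝ → ℝ) {s : ℝ} (hs : s ≤ 0) :
    radialFlux w f s = 0 := by
  rw [radialFlux, hw.eq_zero s hs, div_zero]

theorem abs_radialFlux_le (hw : IsRadialWeight w) (hf : Continuous f) (s : ℝ) :
    |radialFlux w f s| ≤ |∫ x in (0 : ℝ)..s, (|f x|)| := by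
  rcases le_or_gt s 0 with hs | hs
  · rw [hw.radialFlux_of_nonpos f hs, abs_zero]
    exact abs_nonneg _
  · have hwf : Continuous fun x => w x * f x := hw.continuous.mul hf
    rw [radialFlux, abs_div, abs_of_pos (hw.pos s hs), div_le_iff₀ (hw.pos s hs)]
    calc |∫ x in (0 : ℝ)..s, w x * f x| ≤ ∫ x in (0 : ℝ)..s, (|w x * f x|) :=
          abs_integral_le_integral_abs hs.le
      _ ≤ ∫ x in (0 : ℝ)..s, (|f x| * w s) := by
          refine integral_mono_on hs.le (hwf.abs.intervalIntegrable _ _)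
            ((hf.abs.mul_const _).intervalIntegrable _ _) fun x hx => ?_
          rw [abs_mul, abs_of_nonneg (hw.nonneg x), mul_comm]
          gcongr
          exact hw.monotone hx.2
      _ = (∫ x in (0 : ℝ)..s, (|f x|)) * w s := integral_mul_const _ _
      _ ≤ |∫ x in (0 : ℝ)..s, (|f x|)| * w s := by
          have := hw.nonneg s
          gcongr
          exact le_abs_self _

theorem abs_radialFlux_le_of_le_const (hw : IsRadialWeight w) (hf : Continuous f) {C s : ℝ}
    (hC : ∀ x ∈ uIcc 0 s, |f x| ≤ C) : |radialFlux w f s| ≤ C * |s| := by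
  refine (hw.abs_radialFlux_le hf s).trans ?_
  simpa using norm_integral_le_of_norm_le_const (f := fun x => |f x|) (a := 0) (b := s)
    fun x hx => (norm_norm (f x)).trans_le (hC x (uIoc_subset_uIcc hx))

theorem continuous_radialFlux (hw : IsRadialWeight w) (hf : Continuous f) :
    Continuous (radialFlux w f) := by
  have hwf : Continuous fun x => w x * f x := hw.continuous.mul hf
  have continuous_primitive_of {g : ℝ → ℝ} (hg : Continuous g) :
      Continuous fun s => ∫ x in (0 : ℝ)..s, g x :=
    continuous_primitive (fun a b => hg.intervalIntegrable a b) 0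
  refine continuous_iff_continuousAt.2 fun s => ?_
  rcases lt_trichotomy s 0 with hs | rfl | hs
  · refine (continuousAt_const (y := (0 : ℝ))).congr ?_
    filter_upwards [gt_mem_nhds hs] with x hx using (hw.radialFlux_of_nonpos f hx.le).symm
  · rw [ContinuousAt, hw.radialFlux_of_nonpos f le_rfl]
    refine squeeze_zero_norm (hw.abs_radialFlux_le hf) ?_
    simpa using (continuous_primitive_of hf.abs).abs.tendsto 0
  · exact (continuous_primitive_of hwf).continuousAt.div hw.continuous.continuousAt
      (hw.pos s hs).ne'

theorem hasDerivAt_radialFlux (hw : IsRadialWeight w) (hf : Continuous f) {w' t : ℝ} (ht : 0 < t)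
    (hw' : HasDerivAt w w' t) :
    HasDerivAt (radialFlux w f) (f t - w' / w t * radialFlux w f t) t := by
  have hwt := (hw.pos t ht).ne'
  have hprim : HasDerivAt (fun s => ∫ x in (0 : ℝ)..s, w x * f x) (w t * f t) t :=
    ((hw.continuous.mul hf).integral_hasStrictDerivAt 0 t).hasDerivAt
  refine (hprim.div hw' hwt).congr_deriv ?_
  rw [radialFlux]
  field_simp

theorem continuous_radialIterate (hw : IsRadialWeight w) : ∀ j, Continuous (radialIterate w j)
  | 0 => continuous_const
  | j + 1 => continuous_primitive (fun a b =>
      (hw.continuous_radialFlux (hw.continuous_radialIterate j)).intervalIntegrable a b) 0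

theorem integral_radialFlux_of_nonpos (hw : IsRadialWeight w) (f : ℝ → ℝ) {t : ℝ} (ht : t ≤ 0) :
    ∫ s in (0 : ℝ)..t, radialFlux w f s = 0 := by
  refine (integral_congr fun s hs => ?_).trans integral_zero
  rw [uIcc_of_ge ht] at hs
  exact hw.radialFlux_of_nonpos f hs.2

theorem abs_radialIterate_le (hw : IsRadialWeight w) (j : ℕ) (t : ℝ) :
    |radialIterate w j t| ≤ t ^ (2 * j) / (2 * j).factorial := by
  induction j generalizing t with
  | zero => simp [radialIterate]
  | succ j ih =>
    rcases le_total t 0 with ht | ht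
    · simp only [radialIterate, hw.integral_radialFlux_of_nonpos _ ht, abs_zero]
      exact div_nonneg (Even.pow_nonneg (even_two_mul _) _) (Nat.cast_nonneg _)
    have hcont := hw.continuous_radialIterate j
    have flux_le : ∀ s ∈ Icc 0 t,
        |radialFlux w (radialIterate w j) s| ≤ s ^ (2 * j + 1) / (2 * j + 1).factorial := by
      intro s hs
      calc |radialFlux w (radialIterate w j) s|
          ≤ |∫ x in (0 : ℝ)..s, (|radialIterate w j x|)| := hw.abs_radialFlux_le hcont s
        _ = ∫ x in (0 : ℝ)..s, (|radialIterate w j x|) :=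
            abs_of_nonneg (integral_nonneg hs.1 fun _ _ => abs_nonneg _)
        _ ≤ ∫ x in (0 : ℝ)..s, x ^ (2 * j) / (2 * j).factorial :=
            integral_mono hs.1 (hcont.abs.intervalIntegrable _ _)
              ((continuous_pow _).div_const _ |>.intervalIntegrable _ _) ih
        _ = s ^ (2 * j + 1) / (2 * j + 1).factorial := integral_pow_div_factorial _ _
    have hflux := hw.continuous_radialFlux hcont
    calc |radialIterate w (j + 1) t|
        ≤ ∫ s in (0 : ℝ)..t, (|radialFlux w (radialIterate w j) s|) :=
          abs_integral_le_integral_abs ht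
      _ ≤ ∫ s in (0 : ℝ)..t, s ^ (2 * j + 1) / (2 * j + 1).factorial :=
          integral_mono_on ht (hflux.abs.intervalIntegrable _ _)
            ((continuous_pow _).div_const _ |>.intervalIntegrable _ _) flux_le
      _ = t ^ (2 * (j + 1)) / (2 * (j + 1)).factorial := integral_pow_div_factorial _ _

theorem abs_radialSolution_term_le (hw : IsRadialWeight w) {l t M R : ℝ} (hl : |l| ≤ M)
    (ht : |t| ≤ R) (j : ℕ) :
    |(-l) ^ j * radialIterate w j t| ≤ (M * R ^ 2) ^ j / j.factorial := by
  have : 0 ≤ M := (abs_nonneg l).trans hl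
  calc |(-l) ^ j * radialIterate w j t|
      = |l| ^ j * |radialIterate w j t| := by rw [abs_mul, abs_pow, abs_neg]
    _ ≤ |l| ^ j * (t ^ (2 * j) / (2 * j).factorial) := by
        gcongr
        exact hw.abs_radialIterate_le j t
    _ = |l| ^ j * ((|t| ^ 2) ^ j / (2 * j).factorial) := by rw [sq_abs, pow_mul]
    _ ≤ M ^ j * ((R ^ 2) ^ j / j.factorial) := by
        gcongr
        omega
    _ = (M * R ^ 2) ^ j / j.factorial := by rw [mul_pow, mul_div_assoc]

theorem continuous_radialSolution (hw : IsRadialWeight w) :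
    Continuous fun p : ℝ × ℝ => radialSolution w p.1 p.2 := by
  refine continuous_iff_continuousAt.2 fun p => ?_
  set R := ‖p‖ + 1
  have hmem : Metric.closedBall (0 : ℝ × ℝ) R ∈ 𝓝 p :=
    mem_of_superset (Metric.ball_mem_nhds p one_pos) fun q hq => by
      rw [mem_closedBall_zero_iff]
      linarith [norm_le_norm_add_norm_sub p q, mem_ball_iff_norm'.1 hq]
  refine ContinuousOn.continuousAt ?_ hmem
  refine continuousOn_tsum (fun j => Continuous.continuousOn ?_)
    (Real.summable_pow_div_factorial (R * R ^ 2)) fun j q hq => ?_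
  · exact (continuous_fst.neg.pow j).mul ((hw.continuous_radialIterate j).comp continuous_snd)
  · rw [mem_closedBall_zero_iff] at hq
    exact hw.abs_radialSolution_term_le ((norm_fst_le q).trans hq) ((norm_snd_le q).trans hq) j

theorem continuous_radialSolution_right (hw : IsRadialWeight w) (l : ℝ) :
    Continuous (radialSolution w l) :=
  hw.continuous_radialSolution.comp (Continuous.prodMk_right l)

theorem hasSum_radialSolution (hw : IsRadialWeight w) (l t : ℝ) :
    HasSum (fun j : ℕ => (-l) ^ j * radialIterate w j t) (radialSolution w l t) :=
  (Summable.of_norm_bounded (Real.summable_pow_div_factorial (|l| * |t| ^ 2))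
    fun j => hw.abs_radialSolution_term_le le_rfl le_rfl j).hasSum

theorem abs_radialSolution_term_le_of_mem_uIcc (hw : IsRadialWeight w) (l : ℝ) {t x : ℝ}
    (hx : x ∈ uIcc 0 t) (j : ℕ) :
    |(-l) ^ j * radialIterate w j x| ≤ (|l| * |t| ^ 2) ^ j / j.factorial :=
  hw.abs_radialSolution_term_le le_rfl (by simpa using abs_sub_left_of_mem_uIcc hx) j

theorem hasSum_radialFlux_radialSolution (hw : IsRadialWeight w) (l s : ℝ) :
    HasSum (fun j : ℕ => (-l) ^ j * radialFlux w (radialIterate w j) s)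
      (radialFlux w (radialSolution w l) s) := by
  have h := hasSum_integral_of_summable_bound (t := s)
    (F := fun j x => w x * ((-l) ^ j * radialIterate w j x))
    (b := fun j => w |s| * ((|l| * |s| ^ 2) ^ j / j.factorial))
    (fun j => hw.continuous.mul (continuous_const.mul (hw.continuous_radialIterate j)))
    ((Real.summable_pow_div_factorial _).mul_left _) fun j x hx => ?_
  · simp only [tsum_mul_left] at h
    simp only [← radialFlux_const_mul]
    exact h.div_const (w s)
  · have hxs : x ≤ |s| := (le_abs_self x).trans (by simpa using abs_sub_left_of_mem_uIcc hx)
    rw [abs_mul, abs_of_nonneg (hw.nonneg x)]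
    exact mul_le_mul (hw.monotone hxs) (hw.abs_radialSolution_term_le_of_mem_uIcc l hx j)
      (abs_nonneg _) (hw.nonneg _)

theorem radialSolution_eq_one_sub (hw : IsRadialWeight w) (l t : ℝ) :
    radialSolution w l t = 1 - l * ∫ s in (0 : ℝ)..t, radialFlux w (radialSolution w l) s := by
  have hterm : ∀ j, Continuous fun x => (-l) ^ j * radialIterate w j x := fun j =>
    continuous_const.mul (hw.continuous_radialIterate j)
  have hint : HasSum (fun j : ℕ => (-l) ^ j * radialIterate w (j + 1) t)
      (∫ s in (0 : ℝ)..t, radialFlux w (radialSolution w l) s) := by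
    have h := hasSum_integral_of_summable_bound (t := t)
      (F := fun j => radialFlux w fun x => (-l) ^ j * radialIterate w j x)
      (b := fun j => (|l| * |t| ^ 2) ^ j / j.factorial * |t|)
      (fun j => hw.continuous_radialFlux (hterm j))
      ((Real.summable_pow_div_factorial _).mul_right _) fun j x hx => ?_
    · simp only [radialFlux_const_mul, (hw.hasSum_radialFlux_radialSolution l _).tsum_eq,
        intervalIntegral.integral_const_mul] at h
      exact h
    · refine (hw.abs_radialFlux_le_of_le_const (hterm j) fun y hy =>
        hw.abs_radialSolution_term_le_of_mem_uIcc l (uIcc_subset_uIcc_left hx hy) j).trans ?_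
      exact mul_le_mul_of_nonneg_left (by simpa using abs_sub_left_of_mem_uIcc hx) (by positivity)
  rw [radialSolution, (hw.hasSum_radialSolution l t).summable.tsum_eq_zero_add, sub_eq_add_neg,
    ← neg_mul, ← hint.tsum_eq, ← tsum_mul_left]
  simp only [pow_zero, radialIterate, mul_one, pow_succ', mul_assoc]

theorem hasDerivAt_radialSolution (hw : IsRadialWeight w) (l t : ℝ) :
    HasDerivAt (radialSolution w l) (-l * radialFlux w (radialSolution w l) t) t := by
  have hflux := hw.continuous_radialFlux (hw.continuous_radialSolution_right l)
  rw [neg_mul]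
  exact ((hflux.integral_hasStrictDerivAt 0 t).hasDerivAt.const_mul l).const_sub 1
    |>.congr_of_eventuallyEq (.of_forall (hw.radialSolution_eq_one_sub l))

theorem radialSolution_zero_right (hw : IsRadialWeight w) (l : ℝ) : radialSolution w l 0 = 1 := by
  rw [hw.radialSolution_eq_one_sub, integral_same, mul_zero, sub_zero]

theorem antitoneOn_radialSolution (hw : IsRadialWeight w) {l r : ℝ} (hl : 0 ≤ l)
    (hnonneg : ∀ t ∈ Icc 0 r, 0 ≤ radialSolution w l t) :
    AntitoneOn (radialSolution w l) (Icc 0 r) := by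
  refine antitoneOn_of_hasDerivWithinAt_nonpos (convex_Icc 0 r)
    (hw.continuous_radialSolution_right l).continuousOn
    (fun t _ => (hw.hasDerivAt_radialSolution l t).hasDerivWithinAt) fun t ht => ?_
  rw [interior_Icc] at ht
  have hflux : 0 ≤ radialFlux w (radialSolution w l) t :=
    div_nonneg (integral_nonneg ht.1.le fun x hx =>
      mul_nonneg (hw.nonneg x) (hnonneg x ⟨hx.1, hx.2.trans ht.2.le⟩)) (hw.nonneg t)
  exact mul_nonpos_of_nonpos_of_nonneg (neg_nonpos.2 hl) hflux

end IsRadialWeight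

end RadialEquation

section FirstEigenvalue

open Set Topology MeasureTheory

theorem exists_nonneg_and_eq_zero_of_continuous {X : Type*} [TopologicalSpace X] {f : ℝ → X → ℝ}
    (hf : Continuous fun p : ℝ × X => f p.1 p.2) {K : Set X} (hK : IsCompact K) {a b : ℝ}
    (hab : a ≤ b) (ha : ∀ t ∈ K, 0 ≤ f a t) (hb : ∃ t ∈ K, f b t ≤ 0) :
    ∃ c ∈ Icc a b, (∀ t ∈ K, 0 ≤ f c t) ∧ ∃ t ∈ K, f c t = 0 := by
  obtain ⟨s, hsK, hs⟩ := hb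
  have himage : ∀ c, IsCompact (f c '' K) := fun c =>
    hK.image (hf.comp (Continuous.prodMk_right c))
  have hmin : Continuous fun c => sInf (f c '' K) := hK.continuous_sInf hf
  have hmin_b : sInf (f b '' K) ≤ 0 :=
    (csInf_le (himage b).bddBelow (mem_image_of_mem _ hsK)).trans hs
  have hmin_a : 0 ≤ sInf (f a '' K) :=
    le_csInf ⟨f a s, mem_image_of_mem _ hsK⟩ (forall_mem_image.2 ha)
  obtain ⟨c, hc, hzero⟩ := intermediate_value_Icc' hab hmin.continuousOn ⟨hmin_b, hmin_a⟩
  refine ⟨c, hc, fun t ht => ?_, ?_⟩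
  · exact hzero.symm.trans_le (csInf_le (himage c).bddBelow (mem_image_of_mem _ ht))
  · obtain ⟨t, ht, hft⟩ := (himage c).sInf_mem ⟨f c s, mem_image_of_mem _ hsK⟩
    exact ⟨t, ht, hft.trans hzero⟩

theorem IsRadialWeight.exists_radialSolution_eq_zero {w : ℝ → ℝ} (hw : IsRadialWeight w)
    {l r : ℝ} (hl : 0 ≤ l) (h : ∃ t ∈ Icc 0 r, radialSolution w l t ≤ 0) :
    ∃ μ ≤ l, radialSolution w μ r = 0 := by
  obtain ⟨μ, hμ, hnonneg, t, ht, hzero⟩ :=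
    exists_nonneg_and_eq_zero_of_continuous hw.continuous_radialSolution isCompact_Icc hl
      (fun t _ => by simp only [radialSolution_zero_left, zero_le_one]) h
  have hr : r ∈ Icc 0 r := right_mem_Icc.2 (ht.1.trans ht.2)
  have hle := hw.antitoneOn_radialSolution hμ.1 hnonneg ht hr ht.2
  exact ⟨μ, hμ.2, le_antisymm (hle.trans_eq hzero) (hnonneg r hr)⟩

/-- Picone's identity: `(v² u' / u)' = v'² + q v² - (v' - v u' / u)²` whenever `u'' = q u`. -/
theorem sub_le_integral_deriv_sq_add {u u' v v' q : ℝ → ℝ} {a b : ℝ} (hab : a ≤ b)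
    (hu : ∀ t ∈ Ioo a b, HasDerivAt u (u' t) t)
    (hu' : ∀ t ∈ Ioo a b, HasDerivAt u' (q t * u t) t) (hu0 : ∀ t ∈ Ioo a b, u t ≠ 0)
    (hv : ∀ t ∈ Ioo a b, HasDerivAt v (v' t) t)
    (hcont : ContinuousOn (fun t => v t ^ 2 * (u' t / u t)) (Icc a b))
    (hint : IntervalIntegrable (fun t => v' t ^ 2 + q t * v t ^ 2) volume a b) :
    v b ^ 2 * (u' b / u b) - v a ^ 2 * (u' a / u a) ≤ ∫ t in a..b, v' t ^ 2 + q t * v t ^ 2 := by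
  have hquot : ∀ t ∈ Ioo a b, HasDerivAt (fun t => v t ^ 2 * (u' t / u t))
      (v' t ^ 2 + q t * v t ^ 2 - (v' t - v t * (u' t / u t)) ^ 2) t := by
    intro t ht
    have hut := hu0 t ht
    refine (((hv t ht).pow 2).mul ((hu' t ht).div (hu t ht) hut)).congr_deriv ?_
    simp only [Pi.pow_apply, Pi.div_apply]
    field_simp
    ring
  exact intervalIntegral.sub_le_integral_of_hasDeriv_right_of_le hab hcont
    (fun t ht => (hquot t ht).hasDerivWithinAt)
    ((intervalIntegrable_iff_integrableOn_Icc_of_le hab).1 hint)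
    fun t _ => sub_le_self _ (sq_nonneg _)

/-- Data `ρ`, `ρ'` for the Liouville substitution `u = ρ ψ`, which turns the radial equation with
weight `ρ²` into `-u'' + V u = l u` on `(0, ∞)`. Here `ρ'` is the derivative of `ρ`. -/
structure IsLiouvilleFactor (V ρ ρ' : ℝ → ℝ) : Prop where
  monotone : Monotone ρ
  eq_zero : ∀ t ≤ 0, ρ t = 0
  pos : ∀ t, 0 < t → 0 < ρ t
  hasDerivAt : ∀ t, HasDerivAt ρ (ρ' t) t
  continuous_deriv : Continuous ρ'
  hasDerivAt_deriv : ∀ t, 0 < t → HasDerivAt ρ' (V t * ρ t) t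

/-- The Liouville transform `ρ ψ` of the radial solution `ψ` with weight `ρ²`. -/
noncomputable def liouvilleSolution (ρ : ℝ → ℝ) (l t : ℝ) : ℝ :=
  ρ t * radialSolution (fun x => ρ x ^ 2) l t

/-- The derivative of `liouvilleSolution ρ l`, where `ρ'` is the derivative of `ρ`. -/
noncomputable def liouvilleSolutionDeriv (ρ ρ' : ℝ → ℝ) (l t : ℝ) : ℝ :=
  ρ' t * radialSolution (fun x => ρ x ^ 2) l t
    - l * (ρ t * radialFlux (fun x => ρ x ^ 2) (radialSolution (fun x => ρ x ^ 2) l) t)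

namespace IsLiouvilleFactor

variable {V ρ ρ' : ℝ → ℝ}

theorem continuous (h : IsLiouvilleFactor V ρ ρ') : Continuous ρ :=
  continuous_iff_continuousAt.2 fun t => (h.hasDerivAt t).continuousAt

theorem isRadialWeight_sq (h : IsLiouvilleFactor V ρ ρ') : IsRadialWeight fun t => ρ t ^ 2 where
  continuous := h.continuous.pow 2
  monotone := by
    have hnonneg : ∀ t, 0 ≤ ρ t := fun t => by
      rcases le_or_gt t 0 with ht | ht
      · exact (h.eq_zero t ht).ge
      · exact (h.pos t ht).le
    exact fun s t hst => pow_le_pow_left₀ (hnonneg s) (h.monotone hst) 2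
  eq_zero t ht := by simp only [h.eq_zero t ht, ne_eq, OfNat.ofNat_ne_zero, not_false_eq_true,
    zero_pow]
  pos t ht := pow_pos (h.pos t ht) 2

theorem hasDerivAt_liouvilleSolution (h : IsLiouvilleFactor V ρ ρ') (l t : ℝ) :
    HasDerivAt (liouvilleSolution ρ l) (liouvilleSolutionDeriv ρ ρ' l t) t := by
  refine ((h.hasDerivAt t).mul (h.isRadialWeight_sq.hasDerivAt_radialSolution l t)).congr_deriv ?_
  rw [liouvilleSolutionDeriv]
  ring

theorem deriv_liouvilleSolution (h : IsLiouvilleFactor V ρ ρ') (l : ℝ) :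
    deriv (liouvilleSolution ρ l) = liouvilleSolutionDeriv ρ ρ' l :=
  funext fun t => (h.hasDerivAt_liouvilleSolution l t).deriv

theorem continuous_liouvilleSolutionDeriv (h : IsLiouvilleFactor V ρ ρ') (l : ℝ) :
    Continuous (liouvilleSolutionDeriv ρ ρ' l) := by
  have hψ := h.isRadialWeight_sq.continuous_radialSolution_right l
  exact (h.continuous_deriv.mul hψ).sub
    (continuous_const.mul (h.continuous.mul (h.isRadialWeight_sq.continuous_radialFlux hψ)))

theorem hasDerivAt_liouvilleSolutionDeriv (h : IsLiouvilleFactor V ρ ρ') (l : ℝ) {t : ℝ}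
    (ht : 0 < t) :
    HasDerivAt (liouvilleSolutionDeriv ρ ρ' l) ((V t - l) * liouvilleSolution ρ l t) t := by
  have hw := h.isRadialWeight_sq
  have hflux := hw.hasDerivAt_radialFlux (hw.continuous_radialSolution_right l) ht
    ((h.hasDerivAt t).pow 2)
  refine (((h.hasDerivAt_deriv t ht).mul (hw.hasDerivAt_radialSolution l t)).sub
    (((h.hasDerivAt t).mul hflux).const_mul l)).congr_deriv ?_
  have := (h.pos t ht).ne'
  rw [liouvilleSolution]
  field_simp
  ring

theorem isDirichletEigenvalue (h : IsLiouvilleFactor V ρ ρ') {l r : ℝ} (hr : 0 < r)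
    (hzero : radialSolution (fun t => ρ t ^ 2) l r = 0) : IsDirichletEigenvalue V r l := by
  have hw := h.isRadialWeight_sq
  refine ⟨liouvilleSolution ρ l, ?_, ?_, ?_, ?_, ?_, ?_, ?_, ?_⟩
  · have hpos : ∀ᶠ t in 𝓝[>] (0 : ℝ), 0 < radialSolution (fun t => ρ t ^ 2) l t :=
      ((hw.continuous_radialSolution_right l).continuousAt.eventually_const_lt
        (by simp only [hw.radialSolution_zero_right, zero_lt_one])).filter_mono nhdsWithin_le_nhds
    obtain ⟨t, hψ, ht⟩ := (hpos.and (Ioo_mem_nhdsGT hr)).exists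
    exact ⟨t, Ioo_subset_Icc_self ht, (mul_pos (h.pos t ht.1) hψ).ne'⟩
  · exact fun t _ => (h.hasDerivAt_liouvilleSolution l t).continuousAt.continuousWithinAt
  · exact fun t _ => (h.hasDerivAt_liouvilleSolution l t).differentiableAt
  · rw [h.deriv_liouvilleSolution]
    exact (h.continuous_liouvilleSolutionDeriv l).continuousOn
  · rw [h.deriv_liouvilleSolution]
    exact fun t ht => (h.hasDerivAt_liouvilleSolutionDeriv l ht.1).differentiableAt
  · rw [liouvilleSolution, h.eq_zero 0 le_rfl, zero_mul]
  · rw [liouvilleSolution, hzero, mul_zero]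
  · intro t ht
    rw [h.deriv_liouvilleSolution, (h.hasDerivAt_liouvilleSolutionDeriv l ht.1).deriv]
    ring

theorem continuousOn_sq_mul_logDeriv_liouvilleSolution (h : IsLiouvilleFactor V ρ ρ') {l r : ℝ}
    (hpos : ∀ t ∈ Icc 0 r, 0 < radialSolution (fun x => ρ x ^ 2) l t) {v : ℝ → ℝ}
    (hv : Continuous v) (hv0 : v 0 = 0)
    (hcont : ContinuousOn (fun t => v t ^ 2 * (ρ' t / ρ t)) (Icc 0 r)) :
    ContinuousOn
      (fun t => v t ^ 2 * (liouvilleSolutionDeriv ρ ρ' l t / liouvilleSolution ρ l t))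
      (Icc 0 r) := by
  have hψ := h.isRadialWeight_sq.continuous_radialSolution_right l
  have hflux := h.isRadialWeight_sq.continuous_radialFlux hψ
  have hcorr : ContinuousOn
      (fun t => v t ^ 2
        * (l * radialFlux (fun x => ρ x ^ 2) (radialSolution (fun x => ρ x ^ 2) l) t)
        / radialSolution (fun x => ρ x ^ 2) l t) (Icc 0 r) :=
    ((hv.pow 2).mul (continuous_const.mul hflux)).continuousOn.div hψ.continuousOn
      fun t ht => (hpos t ht).ne'
  refine (hcont.sub hcorr).congr fun t ht => ?_
  rcases ht.1.eq_or_lt with rfl | ht0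
  · simp [hv0]
  · have := (hpos t ht).ne'
    have := (h.pos t ht0).ne'
    simp only [liouvilleSolution, liouvilleSolutionDeriv, Pi.sub_apply]
    field_simp

theorem le_rayleigh (h : IsLiouvilleFactor V ρ ρ') {l r : ℝ} (hr : 0 ≤ r)
    (hpos : ∀ t ∈ Icc 0 r, 0 < radialSolution (fun x => ρ x ^ 2) l t) {v : ℝ → ℝ}
    (hv : Differentiable ℝ v) (hv0 : v 0 = 0) (hvr : v r = 0)
    (hcont : ContinuousOn (fun t => v t ^ 2 * (ρ' t / ρ t)) (Icc 0 r))
    (hint : IntervalIntegrable (fun t => deriv v t ^ 2 + V t * v t ^ 2) volume 0 r)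
    (hnorm : 0 < ∫ t in (0 : ℝ)..r, v t ^ 2) : l ≤ Rayleigh V v r := by
  have hmass : IntervalIntegrable (fun t => l * v t ^ 2) volume 0 r :=
    (continuous_const.mul (hv.continuous.pow 2)).intervalIntegrable _ _
  have hsplit : (fun t => deriv v t ^ 2 + (V t - l) * v t ^ 2)
      = fun t => (deriv v t ^ 2 + V t * v t ^ 2) - l * v t ^ 2 := by
    funext t
    ring
  have hpicone := sub_le_integral_deriv_sq_add hr
    (fun t _ => h.hasDerivAt_liouvilleSolution l t)
    (fun t ht => h.hasDerivAt_liouvilleSolutionDeriv l ht.1)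
    (fun t ht => (mul_pos (h.pos t ht.1) (hpos t (Ioo_subset_Icc_self ht))).ne')
    (fun t _ => (hv t).hasDerivAt)
    (h.continuousOn_sq_mul_logDeriv_liouvilleSolution hpos hv.continuous hv0 hcont)
    (hsplit ▸ hint.sub hmass)
  rw [hsplit, intervalIntegral.integral_sub hint hmass, intervalIntegral.integral_const_mul, hv0,
    hvr] at hpicone
  rw [Rayleigh, le_div_iff₀ hnorm]
  linarith

theorem exists_isDirichletEigenvalue_le (h : IsLiouvilleFactor V ρ ρ') {r L : ℝ} (hr : 0 < r)
    {v : ℝ → ℝ} (hv : Differentiable ℝ v) (hv0 : v 0 = 0) (hvr : v r = 0)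
    (hcont : ContinuousOn (fun t => v t ^ 2 * (ρ' t / ρ t)) (Icc 0 r))
    (hint : IntervalIntegrable (fun t => deriv v t ^ 2 + V t * v t ^ 2) volume 0 r)
    (hnorm : 0 < ∫ t in (0 : ℝ)..r, v t ^ 2) (hL : Rayleigh V v r < L) :
    ∃ μ ≤ L, IsDirichletEigenvalue V r μ := by
  have hle {l : ℝ} (hpos : ∀ t ∈ Icc 0 r, 0 < radialSolution (fun x => ρ x ^ 2) l t) :
      l ≤ Rayleigh V v r :=
    h.le_rayleigh hr.le hpos hv hv0 hvr hcont hint hnorm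
  have hL0 : 0 ≤ L :=
    (hle fun t _ => by simp only [radialSolution_zero_left, zero_lt_one]).trans hL.le
  have hnot : ∃ t ∈ Icc 0 r, radialSolution (fun x => ρ x ^ 2) L t ≤ 0 := by
    by_contra! hpos
    exact (hle hpos).not_gt hL
  obtain ⟨μ, hμ, hzero⟩ := h.isRadialWeight_sq.exists_radialSolution_eq_zero hL0 hnot
  exact ⟨μ, hμ, h.isDirichletEigenvalue hr hzero⟩

end IsLiouvilleFactor

end FirstEigenvalue

section SinhIntegral

open Real Set MeasureTheory

theorem integral_Ioi_pow_mul_exp_neg_mul (n : ℕ) {a : ℝ} (ha : 0 < a) :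
    ∫ t in Ioi (0 : ℝ), t ^ n * exp (-(a * t)) = n.factorial / a ^ (n + 1) := by
  have h := integral_rpow_mul_exp_neg_mul_Ioi (a := n + 1) (by positivity) ha
  simp only [add_sub_cancel_right, rpow_natCast, Gamma_nat_eq_factorial] at h
  rw [h, ← Nat.cast_succ, rpow_natCast, one_div, inv_pow, inv_mul_eq_div]

theorem hasSum_inv_sinh_sq {t : ℝ} (ht : 0 < t) :
    HasSum (fun k : ℕ => 4 * k * exp (-(2 * k * t))) (sinh t ^ 2)⁻¹ := by
  have hx : exp (-(2 * t)) < 1 := exp_lt_one_iff.2 (by linarith)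
  have hsum := (hasSum_coe_mul_geometric_of_norm_lt_one (𝕜 := ℝ) (r := exp (-(2 * t)))
    (by rwa [norm_of_nonneg (exp_pos _).le])).mul_left 4
  have hterm (k : ℕ) : 4 * (k * exp (-(2 * t)) ^ k) = 4 * k * exp (-(2 * k * t)) := by
    rw [← exp_nat_mul, ← mul_assoc]
    ring_nf
  have hsinh : (sinh t ^ 2)⁻¹ = 4 * (exp (-(2 * t)) / (1 - exp (-(2 * t))) ^ 2) := by
    have hfactor : sinh t = exp t * (1 - exp (-(2 * t))) / 2 := by
      rw [sinh_eq, mul_sub, ← exp_add]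
      ring_nf
    have hexp : exp (-(2 * t)) * exp t ^ 2 = 1 := by
      rw [← exp_nat_mul, ← exp_add, Nat.cast_two, neg_add_cancel, exp_zero]
    have := sub_pos.2 hx
    rw [hfactor, inv_eq_iff_eq_inv]
    field_simp
    linear_combination 4 * hexp
  simpa only [hterm, hsinh] using hsum

theorem integral_Ioi_sq_div_sinh_sq :
    ∫ t in Ioi (0 : ℝ), t ^ 2 / sinh t ^ 2 = π ^ 2 / 6 := by
  set F : ℕ → ℝ → ℝ := fun k t => 4 * k * (t ^ 2 * exp (-(2 * k * t))) with hF
  have hintegral (k : ℕ) : ∫ t in Ioi (0 : ℝ), F k t = 1 / (k : ℝ) ^ 2 := by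
    rcases k.eq_zero_or_pos with rfl | hk
    · simp [hF]
    · rw [integral_const_mul, integral_Ioi_pow_mul_exp_neg_mul 2 (by positivity)]
      field_simp
      push_cast [Nat.factorial]
      ring
  have hint (k : ℕ) : IntegrableOn (F k) (Ioi 0) := by
    rcases k.eq_zero_or_pos with rfl | hk
    · simp [hF]
    · refine Integrable.of_integral_ne_zero ?_
      rw [hintegral]
      positivity
  have hnorm (k : ℕ) : ∫ t in Ioi (0 : ℝ), ‖F k t‖ = 1 / (k : ℝ) ^ 2 := by
    rw [← hintegral]
    refine integral_congr_ae (ae_of_all _ fun t => norm_of_nonneg ?_)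
    positivity
  have hseries := hasSum_integral_of_summable_integral_norm hint
    (by simpa only [hnorm] using hasSum_zeta_two.summable)
  simp only [hintegral] at hseries
  rw [hasSum_zeta_two.unique hseries]
  refine setIntegral_congr_fun measurableSet_Ioi fun t ht => ?_
  rw [div_eq_mul_inv, ((hasSum_inv_sinh_sq ht).mul_left (t ^ 2)).tsum_eq.symm]
  simp only [hF, mul_left_comm]

theorem integrableOn_Ioi_sq_div_sinh_sq :
    IntegrableOn (fun t : ℝ => t ^ 2 / sinh t ^ 2) (Ioi 0) := by
  refine Integrable.of_integral_ne_zero ?_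
  rw [integral_Ioi_sq_div_sinh_sq]
  positivity

theorem sin_mul_sq_le (c t : ℝ) : sin (c * t) ^ 2 ≤ c ^ 2 * t ^ 2 :=
  (sq_le_sq.2 abs_sin_le_abs).trans_eq (mul_pow ..)

theorem sin_sq_div_sinh_sq_le (c t : ℝ) :
    sin (c * t) ^ 2 / sinh t ^ 2 ≤ c ^ 2 * (t ^ 2 / sinh t ^ 2) := by
  rw [← mul_div_assoc]
  exact div_le_div_of_nonneg_right (sin_mul_sq_le c t) (sq_nonneg _)

theorem integrableOn_Ioi_sin_sq_div_sinh_sq (c : ℝ) :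
    IntegrableOn (fun t => sin (c * t) ^ 2 / sinh t ^ 2) (Ioi 0) := by
  refine (integrableOn_Ioi_sq_div_sinh_sq.const_mul (c ^ 2)).mono'
    (Measurable.aestronglyMeasurable (by fun_prop)) (ae_of_all _ fun t => ?_)
  rw [norm_of_nonneg (by positivity)]
  exact sin_sq_div_sinh_sq_le c t

theorem integral_Ioi_sin_sq_div_sinh_sq_le (c : ℝ) :
    ∫ t in Ioi (0 : ℝ), sin (c * t) ^ 2 / sinh t ^ 2 ≤ c ^ 2 * (π ^ 2 / 6) := by
  rw [← integral_Ioi_sq_div_sinh_sq, ← integral_const_mul]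
  exact integral_mono (integrableOn_Ioi_sin_sq_div_sinh_sq c)
    (integrableOn_Ioi_sq_div_sinh_sq.const_mul _) (sin_sq_div_sinh_sq_le c)

theorem integral_sin_sq_div_sinh_sq_le (c : ℝ) {r : ℝ} (hr : 0 ≤ r) :
    ∫ t in (0 : ℝ)..r, sin (c * t) ^ 2 / sinh t ^ 2 ≤ c ^ 2 * (π ^ 2 / 6) := by
  rw [intervalIntegral.integral_of_le hr]
  exact (setIntegral_mono_set (integrableOn_Ioi_sin_sq_div_sinh_sq c)
    (ae_of_all _ fun t => by positivity) Ioc_subset_Ioi_self.eventuallyLE).trans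
      (integral_Ioi_sin_sq_div_sinh_sq_le c)

theorem intervalIntegrable_sin_sq_div_sinh_sq (c : ℝ) {r : ℝ} (hr : 0 ≤ r) :
    IntervalIntegrable (fun t => sin (c * t) ^ 2 / sinh t ^ 2) volume 0 r :=
  (intervalIntegrable_iff_integrableOn_Ioc_of_le hr).2
    ((integrableOn_Ioi_sin_sq_div_sinh_sq c).mono_set Ioc_subset_Ioi_self)

end SinhIntegral

section SineTestFunction

open Real Set MeasureTheory

theorem hasDerivAt_sin_mul (c t : ℝ) :
    HasDerivAt (fun x => sin (c * x)) (c * cos (c * t)) t := by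
  simpa only [mul_comm, mul_one, id_eq] using ((hasDerivAt_id' t).const_mul c).sin

theorem deriv_sin_mul (c : ℝ) : deriv (fun t => sin (c * t)) = fun t => c * cos (c * t) :=
  funext fun t => (hasDerivAt_sin_mul c t).deriv

theorem integral_sin_pi_div_mul_sq {r : ℝ} (hr : r ≠ 0) :
    ∫ t in (0 : ℝ)..r, sin (π / r * t) ^ 2 = r / 2 := by
  rw [intervalIntegral.integral_comp_mul_left (fun x => sin x ^ 2) (by positivity),
    div_mul_cancel₀ π hr, mul_zero, integral_sin_sq, sin_pi, sin_zero, smul_eq_mul]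
  field_simp
  ring

theorem integral_cos_pi_div_mul_sq {r : ℝ} (hr : r ≠ 0) :
    ∫ t in (0 : ℝ)..r, cos (π / r * t) ^ 2 = r / 2 := by
  rw [intervalIntegral.integral_comp_mul_left (fun x => cos x ^ 2) (by positivity),
    div_mul_cancel₀ π hr, mul_zero, integral_cos_sq, sin_pi, sin_zero, smul_eq_mul]
  field_simp
  ring

theorem rayleigh_integrand_V1_sin (n : ℕ) (c t : ℝ) :
    deriv (fun t => sin (c * t)) t ^ 2 + V1 n t * sin (c * t) ^ 2
      = c ^ 2 * cos (c * t) ^ 2 + ((n : ℝ) - 1) ^ 2 / 4 * sin (c * t) ^ 2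
        + ((n : ℝ) - 1) * ((n : ℝ) - 3) / 4 * (sin (c * t) ^ 2 / sinh t ^ 2) := by
  rw [deriv_sin_mul, V1]
  ring

theorem intervalIntegrable_rayleigh_V1_sin (n : ℕ) (c : ℝ) {r : ℝ} (hr : 0 ≤ r) :
    IntervalIntegrable (fun t => deriv (fun t => sin (c * t)) t ^ 2 + V1 n t * sin (c * t) ^ 2)
      volume 0 r := by
  simp only [rayleigh_integrand_V1_sin]
  exact (Continuous.intervalIntegrable (by fun_prop) _ _).add
    ((intervalIntegrable_sin_sq_div_sinh_sq c hr).const_mul _)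

theorem rayleigh_V1_sin (n : ℕ) {r : ℝ} (hr : 0 < r) :
    Rayleigh (V1 n) (fun t => sin (π / r * t)) r
      = ((n : ℝ) - 1) ^ 2 / 4 + π ^ 2 / r ^ 2 + ((n : ℝ) - 1) * ((n : ℝ) - 3) / (2 * r)
        * ∫ t in (0 : ℝ)..r, sin (π / r * t) ^ 2 / sinh t ^ 2 := by
  have hcos : IntervalIntegrable (fun t => (π / r) ^ 2 * cos (π / r * t) ^ 2) volume 0 r :=
    Continuous.intervalIntegrable (by fun_prop) _ _
  have hsin : IntervalIntegrable (fun t => ((n : ℝ) - 1) ^ 2 / 4 * sin (π / r * t) ^ 2)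
      volume 0 r := Continuous.intervalIntegrable (by fun_prop) _ _
  simp only [Rayleigh, rayleigh_integrand_V1_sin]
  rw [intervalIntegral.integral_add (hcos.add hsin)
      ((intervalIntegrable_sin_sq_div_sinh_sq _ hr.le).const_mul _),
    intervalIntegral.integral_add hcos hsin]
  simp only [intervalIntegral.integral_const_mul, integral_sin_pi_div_mul_sq hr.ne',
    integral_cos_pi_div_mul_sq hr.ne']
  field_simp
  ring

theorem rayleigh_V1_sin_le {n : ℕ} (hn : 3 ≤ n) {r : ℝ} (hr : 0 < r) :
    Rayleigh (V1 n) (fun t => sin (π / r * t)) r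
      ≤ ((n : ℝ) - 1) ^ 2 / 4 + π ^ 2 / r ^ 2
        + ((n : ℝ) - 1) * ((n : ℝ) - 3) * π ^ 4 / (12 * r ^ 3) := by
  have hn' : (3 : ℝ) ≤ n := by exact_mod_cast hn
  have hcoeff : 0 ≤ ((n : ℝ) - 1) * ((n : ℝ) - 3) / (2 * r) :=
    div_nonneg (mul_nonneg (by linarith) (by linarith)) (by positivity)
  rw [rayleigh_V1_sin n hr]
  calc _ ≤ ((n : ℝ) - 1) ^ 2 / 4 + π ^ 2 / r ^ 2 + ((n : ℝ) - 1) * ((n : ℝ) - 3) / (2 * r)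
        * ((π / r) ^ 2 * (π ^ 2 / 6)) := by
        gcongr
        exact integral_sin_sq_div_sinh_sq_le _ hr.le
    _ = _ := by
        field_simp
        ring

end SineTestFunction

section LowestEigenvalueV1

open Real Set Filter Topology MeasureTheory

theorem hasDerivAt_sqrt_sinh_pow (m : ℕ) {t : ℝ} (ht : 0 < t) :
    HasDerivAt (fun x => √(sinh x) ^ m) (m / 2 * √(sinh t) ^ m * (cosh t / sinh t)) t := by
  have hs : 0 < sinh t := sinh_pos_iff.2 ht
  refine (((hasDerivAt_sinh t).sqrt hs.ne').pow m).congr_deriv ?_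
  rcases m with _ | m
  · simp only [Nat.cast_zero, zero_mul, zero_div]
  · nth_rw 4 [← sq_sqrt hs.le]
    have := sqrt_pos.2 hs
    rw [Nat.add_sub_cancel, pow_succ]
    field_simp

theorem sqrt_sinh_pow_of_nonpos {m : ℕ} (hm : m ≠ 0) {t : ℝ} (ht : t ≤ 0) :
    √(sinh t) ^ m = 0 := by
  rw [sqrt_eq_zero_of_nonpos (sinh_nonpos_iff.2 ht), zero_pow hm]

/-- Since `√` vanishes on negative reals, `√(sinh t) ^ (n - 1)` is the extension by zero of
`(sinh t) ^ ((n - 1) / 2)`. -/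
theorem isLiouvilleFactor_V1 {k : ℕ} (hk : k ≠ 0) :
    IsLiouvilleFactor (V1 (k + 3)) (fun t => √(sinh t) ^ (k + 2))
      fun t => (k + 2) / 2 * √(sinh t) ^ k * cosh t where
  monotone _ _ hst := pow_le_pow_left₀ (sqrt_nonneg _) (sqrt_le_sqrt (sinh_le_sinh.2 hst)) _
  eq_zero t ht := sqrt_sinh_pow_of_nonpos (by omega) ht
  pos t ht := pow_pos (sqrt_pos.2 (sinh_pos_iff.2 ht)) _
  continuous_deriv := by fun_prop
  hasDerivAt t := by
    have hpos : ∀ t, 0 < t → HasDerivAt (fun t => √(sinh t) ^ (k + 2))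
        ((k + 2) / 2 * √(sinh t) ^ k * cosh t) t := by
      intro t ht
      have hs : 0 < sinh t := sinh_pos_iff.2 ht
      refine (hasDerivAt_sqrt_sinh_pow (k + 2) ht).congr_deriv ?_
      rw [pow_add, sq_sqrt hs.le]
      field_simp
      push_cast
      ring
    have hneg : ∀ t < 0, HasDerivAt (fun t => √(sinh t) ^ (k + 2))
        ((k + 2) / 2 * √(sinh t) ^ k * cosh t) t := by
      intro t ht
      rw [sqrt_sinh_pow_of_nonpos hk ht.le, mul_zero, zero_mul]
      refine (hasDerivAt_const t 0).congr_of_eventuallyEq ?_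
      filter_upwards [gt_mem_nhds ht] with x hx
      exact sqrt_sinh_pow_of_nonpos (by omega) hx.le
    exact hasDerivAt_of_hasDerivAt_of_ne'
      (fun s hs => hs.lt_or_gt.elim (hneg s) (hpos s))
      (by fun_prop) (by fun_prop) t
  hasDerivAt_deriv t ht := by
    have hs : 0 < sinh t := sinh_pos_iff.2 ht
    refine (((hasDerivAt_sqrt_sinh_pow k ht).const_mul _).mul (hasDerivAt_cosh t)).congr_deriv ?_
    rw [V1, pow_add, sq_sqrt hs.le]
    push_cast
    field_simp
    rw [cosh_sq]
    ring

theorem continuous_sin_sq_div_sinh (c : ℝ) : Continuous fun t => sin (c * t) ^ 2 / sinh t := by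
  refine continuous_iff_continuousAt.2 fun t => ?_
  rcases eq_or_ne t 0 with rfl | ht
  · have hbound (t : ℝ) : ‖sin (c * t) ^ 2 / sinh t‖ ≤ c ^ 2 * |sinh t| := by
      rw [norm_div, norm_eq_abs, norm_eq_abs, abs_sq]
      refine div_le_of_le_mul₀ (abs_nonneg _) (by positivity) ?_
      calc sin (c * t) ^ 2 ≤ c ^ 2 * t ^ 2 := sin_mul_sq_le c t
        _ ≤ c ^ 2 * (|sinh t| * |sinh t|) := by
            rw [← sq_abs t, abs_sinh, ← sq]
            gcongr
            exact self_le_sinh_iff.2 (abs_nonneg t)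
        _ = c ^ 2 * |sinh t| * |sinh t| := (mul_assoc ..).symm
    have hlim : Tendsto (fun t => c ^ 2 * |sinh t|) (𝓝 0) (𝓝 0) := by
      simpa only [sinh_zero, abs_zero, mul_zero] using
        (Continuous.tendsto (by fun_prop : Continuous fun t => c ^ 2 * |sinh t|) 0)
    simpa only [ContinuousAt, sinh_zero, div_zero] using squeeze_zero_norm hbound hlim
  · exact ContinuousAt.div (by fun_prop) (by fun_prop) (sinh_ne_zero.2 ht)

theorem continuousOn_sin_sq_mul_logDeriv_sqrt_sinh_pow (k : ℕ) (c r : ℝ) :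
    ContinuousOn (fun t => sin (c * t) ^ 2 *
      ((k + 2) / 2 * √(sinh t) ^ k * cosh t / √(sinh t) ^ (k + 2))) (Icc 0 r) := by
  refine (((continuous_sin_sq_div_sinh c).mul continuous_cosh).const_mul
    ((k + 2) / 2 : ℝ)).continuousOn.congr fun t ht => ?_
  rcases ht.1.eq_or_lt with rfl | ht0
  · simp only [Pi.mul_apply, mul_zero, sin_zero, ne_eq, OfNat.ofNat_ne_zero, not_false_eq_true,
      zero_pow, zero_mul, zero_div]
  · have hs : 0 < sinh t := sinh_pos_iff.2 ht0
    have := sqrt_pos.2 hs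
    simp only [Pi.mul_apply, pow_add, sq_sqrt hs.le]
    field_simp

theorem isDirichletEigenvalue_const (c : ℝ) {r : ℝ} (hr : 0 < r) :
    IsDirichletEigenvalue (fun _ => c) r (c + π ^ 2 / r ^ 2) := by
  have hderiv : deriv (fun t => sin (π / r * t)) = fun t => π / r * cos (π / r * t) :=
    deriv_sin_mul _
  have hderiv₂ (t : ℝ) : HasDerivAt (fun t => π / r * cos (π / r * t))
      (-(π / r) ^ 2 * sin (π / r * t)) t := by
    refine ((((hasDerivAt_id' t).const_mul (π / r)).cos).const_mul (π / r)).congr_deriv ?_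
    ring
  refine ⟨fun t => sin (π / r * t), ⟨r / 2, ⟨by positivity, by linarith⟩, ?_⟩, by fun_prop,
    by fun_prop, ?_, ?_, ?_, ?_, fun t _ => ?_⟩
  · have : π / r * (r / 2) = π / 2 := by field_simp
    simp only [this, sin_pi_div_two, ne_eq, one_ne_zero, not_false_eq_true]
  · rw [hderiv]
    fun_prop
  · rw [hderiv]
    exact fun t _ => (hderiv₂ t).differentiableAt
  · simp only [mul_zero, sin_zero]
  · simp only [div_mul_cancel₀ π hr.ne', sin_pi]
  · rw [hderiv, (hderiv₂ t).deriv]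
    ring

theorem exists_isDirichletEigenvalue_V1_le {n : ℕ} (hn : 3 ≤ n) {r L : ℝ} (hr : 0 < r)
    (hL : Rayleigh (V1 n) (fun t => sin (π / r * t)) r < L) :
    ∃ μ ≤ L, IsDirichletEigenvalue (V1 n) r μ := by
  obtain ⟨k, rfl⟩ := Nat.exists_eq_add_of_le' hn
  rcases eq_or_ne k 0 with rfl | hk
  · have hV : V1 (0 + 3) = fun _ => 1 := by
      funext t
      norm_num [V1]
    have hR : Rayleigh (V1 (0 + 3)) (fun t => sin (π / r * t)) r = 1 + π ^ 2 / r ^ 2 := by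
      rw [rayleigh_V1_sin _ hr]
      norm_num
    exact ⟨1 + π ^ 2 / r ^ 2, (hR.symm.trans_lt hL).le, hV ▸ isDirichletEigenvalue_const 1 hr⟩
  · refine (isLiouvilleFactor_V1 hk).exists_isDirichletEigenvalue_le hr
      (v := fun t => sin (π / r * t)) (by fun_prop) ?_ ?_
      (continuousOn_sin_sq_mul_logDeriv_sqrt_sinh_pow k _ r)
      (intervalIntegrable_rayleigh_V1_sin _ _ hr.le) ?_ hL
    · rw [mul_zero, sin_zero]
    · rw [div_mul_cancel₀ π hr.ne', sin_pi]
    · rw [integral_sin_pi_div_mul_sq hr.ne']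
      positivity

end LowestEigenvalueV1

/-- For `n ≥ 3`, `r > 0` and `v(t) = sin(πt/r)`, the Rayleigh quotient of `v` for `V₁` is at
most `(n−1)²/4 + π²/r² + (n−1)(n−3)π⁴/(12r³)`; consequently the first Dirichlet eigenvalue
of `-d²/dt² + V₁` on `[0, r]` (i.e. `λ₁(B_r)` for the geodesic ball of radius `r` in `ℍⁿ`)
satisfies the same bound. -/
theorem rayleigh_bound_V1 (n : ℕ) (hn : 3 ≤ n) (r : ℝ) (hr : 0 < r) :
    Rayleigh (V1 n) (fun t => Real.sin (Real.pi * t / r)) r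
      ≤ ((n : ℝ) - 1) ^ 2 / 4 + Real.pi ^ 2 / r ^ 2
        + ((n : ℝ) - 1) * ((n : ℝ) - 3) * Real.pi ^ 4 / (12 * r ^ 3) ∧
    ∀ lam : ℝ, IsDirichletEigenvalue (V1 n) r lam →
      (∀ μ : ℝ, IsDirichletEigenvalue (V1 n) r μ → lam ≤ μ) →
      lam ≤ ((n : ℝ) - 1) ^ 2 / 4 + Real.pi ^ 2 / r ^ 2
        + ((n : ℝ) - 1) * ((n : ℝ) - 3) * Real.pi ^ 4 / (12 * r ^ 3) := by
  have hphase : (fun t => Real.sin (Real.pi * t / r)) = fun t => Real.sin (Real.pi / r * t) := by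
    simp only [mul_div_right_comm]
  rw [hphase]
  have hbound := rayleigh_V1_sin_le hn hr
  refine ⟨hbound, fun lam _ hmin => le_trans ?_ hbound⟩
  refine le_of_forall_gt_imp_ge_of_dense fun L hL => ?_
  obtain ⟨μ, hμL, hμ⟩ := exists_isDirichletEigenvalue_V1_le hn hr hL
  exact (hmin μ hμ).trans hμL
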